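/- The minimax Bellman operator T has a unique fixed point v* ∈ ℝ^S, and v* is the equilibrium value of the zero-sum Markov game: componentwise, v* = max_{μ} min_{ν} v^{μ,ν} = min_{ν} max_{μ} v^{μ,ν}, where the maxima and minima range over stationary policies; in particular, the game has a well-defined value. -/

import Mathlib

/-!
The operator `T` is a sup-norm `γ`-contraction of `S → ℝ`, because each `T^{μ,ν}` is one and
`sup inf` of bounded functions is nonexpansive (`supInf_le_add`); Banach's theorem provides the
unique fixed point `v*`.

At a state `s`, `T^{μ,ν} v*` is the mixed payoff of a one-shot game with a continuous payoff on
`A × B` (`Tpol_eq_stage`). The minimax theorem for such games, in the approximate form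
`minimax_approx` proved by a finite net and Hahn-Banach separation, yields for every `ε > 0`
stationary policies `μ`, `ν` with `T^{μ,ν'} v* ≥ v* - ε` for all `ν'` and
`T^{μ',ν} v* ≤ v* + ε` for all `μ'`. Since `v^{μ,ν}` is the fixed point of `T^{μ,ν}`
(`vVal_fixed`), the maximum principle `le_div_of_le_discounted` turns these into
`v^{μ,ν'} ≥ v* - ε / (1 - γ)` and `v^{μ',ν} ≤ v* + ε / (1 - γ)`, so `v*` is both the lower and the
upper value (`saddle_of_approx`). Working with `ε`-optimal policies avoids weak compactness of the
spaces of probability measures.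
-/

open MeasureTheory

/-- Expected one-step reward `r^{μ,ν}(s) = ∫_A ∫_B r(s,a,b) dν(s)(b) dμ(s)(a)`. -/
noncomputable def rPol {S A B : Type*} [MeasurableSpace A] [MeasurableSpace B]
    (r : S → A → B → ℝ)
    (μ : S → ProbabilityMeasure A) (ν : S → ProbabilityMeasure B) (s : S) : ℝ :=
  ∫ a, ∫ b, r s a b ∂(ν s : Measure B) ∂(μ s : Measure A)

/-- Induced stochastic matrix `P^{μ,ν}(s,s') = ∫_A ∫_B P(s'|s,a,b) dν(s)(b) dμ(s)(a)`. -/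
noncomputable def Pmat {S A B : Type*} [Fintype S] [MeasurableSpace A] [MeasurableSpace B]
    (P : S → S → A → B → ℝ)
    (μ : S → ProbabilityMeasure A) (ν : S → ProbabilityMeasure B) : Matrix S S ℝ :=
  Matrix.of fun s s' => ∫ a, ∫ b, P s s' a b ∂(ν s : Measure B) ∂(μ s : Measure A)

/-- Fixed-policy Bellman operator `T^{μ,ν} v = r^{μ,ν} + γ P^{μ,ν} v`. -/
noncomputable def Tpol {S A B : Type*} [Fintype S] [MeasurableSpace A] [MeasurableSpace B]
    (γ : ℝ) (r : S → A → B → ℝ) (P : S → S → A → B → ℝ)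
    (μ : S → ProbabilityMeasure A) (ν : S → ProbabilityMeasure B)
    (v : S → ℝ) : S → ℝ :=
  fun s => rPol r μ ν s + γ * (Pmat P μ ν).mulVec v s

/-- Value of the pair of stationary policies: `v^{μ,ν} = Σ_{t≥0} γ^t (P^{μ,ν})^t r^{μ,ν}`. -/
noncomputable def vVal {S A B : Type*} [Fintype S] [DecidableEq S]
    [MeasurableSpace A] [MeasurableSpace B]
    (γ : ℝ) (r : S → A → B → ℝ) (P : S → S → A → B → ℝ)
    (μ : S → ProbabilityMeasure A) (ν : S → ProbabilityMeasure B) : S → ℝ :=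
  ∑' t : ℕ, γ ^ t • ((Pmat P μ ν ^ t).mulVec (rPol r μ ν))

/-! ### Suprema of infima of bounded payoffs -/

section Aux

lemma supInf_le_add {X Y : Type*} [Nonempty X] [Nonempty Y] {G H : X → Y → ℝ} {C d : ℝ}
    (hG : ∀ x y, |G x y| ≤ C) (hH : ∀ x y, |H x y| ≤ C) (h : ∀ x y, G x y ≤ H x y + d) :
    (⨆ x, ⨅ y, G x y) ≤ (⨆ x, ⨅ y, H x y) + d := by
  have bG : ∀ x, BddBelow (Set.range (G x)) := fun x =>
    ⟨-C, by rintro _ ⟨y, rfl⟩; exact (abs_le.1 (hG x y)).1⟩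
  have bH : ∀ x, BddBelow (Set.range (H x)) := fun x =>
    ⟨-C, by rintro _ ⟨y, rfl⟩; exact (abs_le.1 (hH x y)).1⟩
  have bS : BddAbove (Set.range fun x => ⨅ y, H x y) := by
    refine ⟨C, ?_⟩
    rintro _ ⟨x, rfl⟩
    inhabit Y
    exact (ciInf_le (bH x) default).trans (abs_le.1 (hH x default)).2
  refine ciSup_le fun x => ?_
  have h1 : (⨅ y, G x y) - d ≤ ⨅ y, H x y :=
    le_ciInf fun y => by linarith [ciInf_le (bG x) y, h x y]
  linarith [le_ciSup bS x]

/-- If `w` can be guaranteed by each player up to every `ε > 0`, then `w` is both the lower and the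
upper value. -/
lemma saddle_of_approx {X Y : Type*} [Nonempty X] [Nonempty Y] {G : X → Y → ℝ} {C w : ℝ}
    (hG : ∀ x y, |G x y| ≤ C) (h1 : ∀ ε > 0, ∃ x, ∀ y, w - ε ≤ G x y)
    (h2 : ∀ ε > 0, ∃ y, ∀ x, G x y ≤ w + ε) :
    w = (⨆ x, ⨅ y, G x y) ∧ w = ⨅ y, ⨆ x, G x y := by
  inhabit X
  inhabit Y
  have bI : ∀ x, BddBelow (Set.range (G x)) := fun x =>
    ⟨-C, by rintro _ ⟨y, rfl⟩; exact (abs_le.1 (hG x y)).1⟩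
  have bA : ∀ y, BddAbove (Set.range fun x => G x y) := fun y =>
    ⟨C, by rintro _ ⟨x, rfl⟩; exact (abs_le.1 (hG x y)).2⟩
  have bS : BddAbove (Set.range fun x => ⨅ y, G x y) := by
    refine ⟨C, ?_⟩
    rintro _ ⟨x, rfl⟩
    exact (ciInf_le (bI x) default).trans (abs_le.1 (hG x default)).2
  have bT : BddBelow (Set.range fun y => ⨆ x, G x y) := by
    refine ⟨-C, ?_⟩
    rintro _ ⟨y, rfl⟩
    exact (abs_le.1 (hG default y)).1.trans (le_ciSup (bA y) default)
  have lo : w ≤ ⨆ x, ⨅ y, G x y := by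
    refine le_of_forall_pos_le_add fun ε hε => ?_
    obtain ⟨x, hx⟩ := h1 ε hε
    linarith [le_ciSup bS x, le_ciInf hx]
  have hi : (⨅ y, ⨆ x, G x y) ≤ w := by
    refine le_of_forall_pos_le_add fun ε hε => ?_
    obtain ⟨y, hy⟩ := h2 ε hε
    exact (ciInf_le bT y).trans (ciSup_le hy)
  have mid : (⨆ x, ⨅ y, G x y) ≤ ⨅ y, ⨆ x, G x y :=
    ciSup_le fun x => le_ciInf fun y => (ciInf_le (bI x) y).trans (le_ciSup (bA y) x)
  exact ⟨le_antisymm lo (mid.trans hi), le_antisymm (lo.trans mid) hi⟩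

/-! ### The minimax theorem for mixed strategies -/

lemma integrable_of_continuous {X : Type*} [MetricSpace X] [CompactSpace X] [MeasurableSpace X]
    [BorelSpace X] (m : Measure X) [IsFiniteMeasure m] {f : X → ℝ} (hf : Continuous f) :
    Integrable f m :=
  hf.integrable_of_hasCompactSupport (HasCompactSupport.of_compactSpace f)

/-- Finite convex combinations of probability measures, described by their action on continuous
functions. -/
lemma exists_mixture {X ι : Type*} [Fintype ι] [MetricSpace X] [CompactSpace X] [MeasurableSpace X]
    [BorelSpace X] (w : ι → ℝ) (hw : ∀ i, 0 ≤ w i) (hw1 : ∑ i, w i = 1)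
    (m : ι → ProbabilityMeasure X) :
    ∃ m' : ProbabilityMeasure X, ∀ f : X → ℝ, Continuous f →
      ∫ x, f x ∂(m' : Measure X) = ∑ i, w i * ∫ x, f x ∂(m i : Measure X) := by
  let M : Measure X := ∑ i, ENNReal.ofReal (w i) • (m i : Measure X)
  have hM : IsProbabilityMeasure M := by
    constructor
    simp only [M, Measure.coe_finsetSum, Finset.sum_apply, Measure.smul_apply, measure_univ,
      smul_eq_mul, mul_one]
    rw [← ENNReal.ofReal_sum_of_nonneg fun i _ => hw i, hw1, ENNReal.ofReal_one]
  refine ⟨⟨M, hM⟩, fun f hf => ?_⟩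
  change ∫ x, f x ∂M = _
  rw [integral_finsetSum_measure fun i _ =>
    (integrable_of_continuous (m i : Measure X) hf).smul_measure ENNReal.ofReal_ne_top]
  refine Finset.sum_congr rfl fun i _ => ?_
  rw [integral_smul_measure, ENNReal.toReal_ofReal (hw i), smul_eq_mul]

/-- Finitely many pure strategies of the minimizing player approximate, uniformly in `a`, all the
others. -/
lemma exists_finite_net {A B : Type*} [MetricSpace A] [CompactSpace A]
    [MetricSpace B] [CompactSpace B] {f : A → B → ℝ} (hf : Continuous fun p : A × B => f p.1 p.2)
    {ε : ℝ} (hε : 0 < ε) :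
    ∃ t : Finset B, ∀ b, ∃ i : t, ∀ a, f a i ≤ f a b + ε := by
  obtain ⟨δ, hδ, h⟩ := Metric.uniformContinuous_iff.1
    (CompactSpace.uniformContinuous_of_continuous hf) ε hε
  obtain ⟨t, -, htf, ht⟩ := (isCompact_univ (X := B)).finite_cover_balls hδ
  refine ⟨htf.toFinset, fun b => ?_⟩
  obtain ⟨i, hi, hb⟩ := Set.mem_iUnion₂.1 (ht (Set.mem_univ b))
  refine ⟨⟨i, htf.mem_toFinset.2 hi⟩, fun a => ?_⟩
  have := h (a := (a, i)) (b := (a, b)) (by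
    rw [Prod.dist_eq]; simpa [hδ, dist_comm] using hb)
  rw [Real.dist_eq] at this
  linarith [(abs_lt.1 this).2]

variable {A B : Type*} [MetricSpace A] [CompactSpace A] [MeasurableSpace A] [BorelSpace A]
  [MetricSpace B] [CompactSpace B] [MeasurableSpace B] [BorelSpace B]

lemma iterated_eq_prod (m : ProbabilityMeasure A) (n : ProbabilityMeasure B) {f : A → B → ℝ}
    (hf : Continuous fun p : A × B => f p.1 p.2) :
    ∫ a, ∫ b, f a b ∂(n : Measure B) ∂(m : Measure A)
      = ∫ p, f p.1 p.2 ∂((m : Measure A).prod (n : Measure B)) :=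
  (integral_prod _ (integrable_of_continuous _ hf)).symm

lemma iterated_swap (m : ProbabilityMeasure A) (n : ProbabilityMeasure B) {f : A → B → ℝ}
    (hf : Continuous fun p : A × B => f p.1 p.2) :
    ∫ a, ∫ b, f a b ∂(n : Measure B) ∂(m : Measure A)
      = ∫ b, ∫ a, f a b ∂(m : Measure A) ∂(n : Measure B) :=
  integral_integral_swap (integrable_of_continuous _ hf)

lemma exists_bound {f : A → B → ℝ} (hf : Continuous fun p : A × B => f p.1 p.2) :
    ∃ C, ∀ (m : ProbabilityMeasure A) (n : ProbabilityMeasure B),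
      |∫ a, ∫ b, f a b ∂(n : Measure B) ∂(m : Measure A)| ≤ C := by
  obtain ⟨C, hC⟩ := isCompact_univ.exists_bound_of_continuousOn hf.continuousOn
  refine ⟨C, fun m n => ?_⟩
  rw [iterated_eq_prod m n hf]
  simpa using norm_integral_le_of_norm_le_const
    (μ := (m : Measure A).prod (n : Measure B)) (.of_forall fun p => hC p (Set.mem_univ p))

/-- The nontrivial half of the minimax theorem, up to `ε`: if the minimizer can answer each mixed
strategy `m` with a payoff below `c`, then a single mixed strategy `n` keeps the payoff below
`c + ε` against every `m`. Over a finite net `t` of pure strategies, the payoff vectors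
`(∫ f(a, i) dm(a))_{i ∈ t}` form a convex set disjoint from the orthant `{x | ∀ i, c + ε/2 < x i}`;
the normalized coefficients of a separating functional are the weights of `n`. -/
lemma minimax_approx [Nonempty A] {f : A → B → ℝ} (hf : Continuous fun p : A × B => f p.1 p.2)
    {c ε : ℝ} (hε : 0 < ε)
    (hc : ∀ m : ProbabilityMeasure A, ∃ n : ProbabilityMeasure B,
      ∫ a, ∫ b, f a b ∂(n : Measure B) ∂(m : Measure A) < c) :
    ∃ n : ProbabilityMeasure B, ∀ m : ProbabilityMeasure A,
      ∫ a, ∫ b, f a b ∂(n : Measure B) ∂(m : Measure A) ≤ c + ε := by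
  classical
  obtain ⟨t, ht⟩ := exists_finite_net hf (half_pos hε)
  have hfb : ∀ b, Continuous fun a => f a b := fun b =>
    hf.comp (continuous_id.prodMk continuous_const)
  have hfa : ∀ a, Continuous fun b => f a b := fun a =>
    hf.comp (continuous_const.prodMk continuous_id)
  let k : ProbabilityMeasure A → t → ℝ := fun m i => ∫ a, f a i ∂(m : Measure A)
  let U : Set (t → ℝ) := Set.univ.pi fun _ => Set.Ioi (c + ε / 2)
  have hUo : IsOpen U := isOpen_set_pi Set.finite_univ fun _ _ => isOpen_Ioi
  have hUc : Convex ℝ U := convex_pi fun _ _ => convex_Ioi _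
  have hKc : Convex ℝ (Set.range k) := by
    rintro _ ⟨m₁, rfl⟩ _ ⟨m₂, rfl⟩ p q hp hq hpq
    obtain ⟨m, hm⟩ := exists_mixture (ι := Fin 2) ![p, q] (by simp [Fin.forall_fin_two, hp, hq])
      (by simpa using hpq) ![m₁, m₂]
    refine ⟨m, funext fun i => ?_⟩
    simpa [k] using hm _ (hfb i)
  have hdis : Disjoint U (Set.range k) := by
    rw [Set.disjoint_left]
    rintro _ hx ⟨m, rfl⟩
    obtain ⟨n, hn⟩ := hc m
    rw [iterated_swap m n hf] at hn
    refine absurd hn (not_lt.2 ?_)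
    have hge : ∀ b, c ≤ ∫ a, f a b ∂(m : Measure A) := fun b => by
      obtain ⟨i, hi⟩ := ht b
      have h1 : c + ε / 2 < ∫ a, f a i ∂(m : Measure A) := hx i (Set.mem_univ i)
      have h2 : ∫ a, f a i ∂(m : Measure A) ≤ ∫ a, (f a b + ε / 2) ∂(m : Measure A) :=
        integral_mono (integrable_of_continuous _ (hfb i))
          (integrable_of_continuous _ ((hfb b).add continuous_const)) hi
      rw [integral_add (integrable_of_continuous _ (hfb b)) (integrable_const _)] at h2
      simp at h2
      linarith
    have hint : Integrable (fun b => ∫ a, f a b ∂(m : Measure A)) (n : Measure B) :=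
      (integrable_of_continuous ((m : Measure A).prod (n : Measure B)) hf).integral_prod_right
    simpa using integral_mono (integrable_const c) hint hge
  obtain ⟨φ, u, hφU, hφK⟩ := geometric_hahn_banach_open hUc hUo hKc hdis
  let e : t → t → ℝ := fun i => Pi.single i 1
  have hφ : ∀ x : t → ℝ, φ x = ∑ i, x i * φ (e i) := fun x => by
    conv_lhs => rw [pi_eq_sum_univ' x]
    rw [map_sum]
    exact Finset.sum_congr rfl fun i _ => by rw [map_smul, smul_eq_mul]
  -- The orthant is unbounded in each direction `e i`, so `φ` is nonpositive there.
  have hneg : ∀ i, φ (e i) ≤ 0 := fun i => by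
    by_contra! hpos
    let x₀ : t → ℝ := fun _ => c + ε
    have hM : 0 ≤ |u - φ x₀| / φ (e i) := by positivity
    have := hφU (x₀ + (|u - φ x₀| / φ (e i)) • e i) (by
      intro j _
      have : 0 ≤ e i j := by
        by_cases h : j = i <;> simp [e, h]
      have := mul_nonneg hM this
      simp only [x₀, Pi.add_apply, Pi.smul_apply, smul_eq_mul, Set.mem_Ioi] at this ⊢
      linarith)
    rw [map_add, map_smul, smul_eq_mul, div_mul_cancel₀ _ hpos.ne'] at this
    linarith [le_abs_self (u - φ x₀)]
  obtain ⟨a₀⟩ := ‹Nonempty A›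
  have hx₀ : φ (fun _ => c + ε) < u := hφU _ fun _ _ => by
    simp only [Set.mem_Ioi]; linarith
  set Λ : ℝ := ∑ i, -φ (e i) with hΛ
  have hΛ0 : 0 ≤ Λ := Finset.sum_nonneg fun i _ => neg_nonneg.2 (hneg i)
  -- Otherwise `φ = 0`, which separates nothing since both sets are nonempty.
  have hΛpos : 0 < Λ := by
    refine hΛ0.lt_of_ne' fun h0 => ?_
    have hz : ∀ i, φ (e i) = 0 := fun i => by
      simpa using (Finset.sum_eq_zero_iff_of_nonneg
        fun i _ => neg_nonneg.2 (hneg i)).1 h0 i (Finset.mem_univ i)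
    have hz' : ∀ x, φ x = 0 := fun x => by rw [hφ]; simp [hz]
    have := hφK _ ⟨⟨Measure.dirac a₀, inferInstance⟩, rfl⟩
    rw [hz'] at this hx₀
    linarith
  obtain ⟨n, hn⟩ := exists_mixture (fun i => -φ (e i) / Λ)
    (fun i => div_nonneg (neg_nonneg.2 (hneg i)) hΛ0)
    (by rw [← Finset.sum_div, ← hΛ, div_self hΛpos.ne'])
    (fun i : t => (⟨Measure.dirac (i : B), inferInstance⟩ : ProbabilityMeasure B))
  refine ⟨n, fun m => ?_⟩
  have h1 : ∀ a, ∫ b, f a b ∂(n : Measure B) = ∑ i : t, -φ (e i) / Λ * f a i := fun a => by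
    rw [hn _ (hfa a)]
    simp
  simp_rw [h1]
  rw [integral_finsetSum _ fun (i : t) _ =>
    (integrable_of_continuous _ (hfb i)).const_mul (-φ (e i) / Λ)]
  simp_rw [integral_const_mul]
  have h2 : φ (fun _ => c + ε) < φ (k m) := hx₀.trans_le (hφK _ ⟨m, rfl⟩)
  rw [hφ, hφ (k m), ← Finset.mul_sum] at h2
  have h3 : ∑ i : t, -φ (e i) / Λ * ∫ a, f a i ∂(m : Measure A)
      = -(∑ i, k m i * φ (e i)) / Λ := by
    rw [← Finset.sum_neg_distrib, Finset.sum_div]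
    exact Finset.sum_congr rfl fun i _ => by simp only [k]; ring
  rw [h3, div_le_iff₀ hΛpos, hΛ, Finset.sum_neg_distrib]
  linarith

end Aux

/-! ### Discounted stochastic matrices -/

section Stochastic

variable {S : Type*} [Fintype S]

lemma norm_mulVec_le_of_stochastic {Q : Matrix S S ℝ} (h0 : ∀ s s', 0 ≤ Q s s')
    (h1 : ∀ s, ∑ s', Q s s' = 1) (v : S → ℝ) : ‖Q.mulVec v‖ ≤ ‖v‖ := by
  refine (pi_norm_le_iff_of_nonneg (norm_nonneg v)).2 fun s => ?_
  calc ‖∑ s', Q s s' * v s'‖ ≤ ∑ s', Q s s' * ‖v‖ := by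
        refine norm_sum_le_of_le _ fun s' _ => ?_
        rw [norm_mul, Real.norm_of_nonneg (h0 s s')]
        exact mul_le_mul_of_nonneg_left (norm_le_pi_norm v s') (h0 s s')
    _ = ‖v‖ := by rw [← Finset.sum_mul, h1, one_mul]

/-- Maximum principle for the discounted Bellman inequality: a subsolution of `d ≤ ε + γ Q d` is
bounded by `ε / (1 - γ)`, as seen at a state where `d` is maximal. -/
lemma le_div_of_le_discounted {Q : Matrix S S ℝ} (h0 : ∀ s s', 0 ≤ Q s s')
    (h1 : ∀ s, ∑ s', Q s s' = 1) {γ ε : ℝ} (hγ : γ ∈ Set.Ioo (0:ℝ) 1) {d : S → ℝ}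
    (hd : ∀ s, d s ≤ ε + γ * Q.mulVec d s) (s : S) : d s ≤ ε / (1 - γ) := by
  have : Nonempty S := ⟨s⟩
  obtain ⟨z, hz⟩ := Finite.exists_max d
  have hQ : Q.mulVec d z ≤ d z := by
    calc ∑ s', Q z s' * d s' ≤ ∑ s', Q z s' * d z :=
          Finset.sum_le_sum fun s' _ => mul_le_mul_of_nonneg_left (hz s') (h0 z s')
      _ = d z := by rw [← Finset.sum_mul, h1, one_mul]
  rw [le_div_iff₀ (sub_pos.2 hγ.2)]
  have h2 := mul_le_mul_of_nonneg_left hQ hγ.1.le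
  have h3 := mul_le_mul_of_nonneg_right (hz s) (sub_pos.2 hγ.2).le
  linarith [hd z]

/-- The discounted Neumann series `∑ γ^t Q^t ρ` solves `x = ρ + γ Q x`: the powers of `Q` are
nonexpansive in sup norm, so the series converges and `Q` passes inside it. -/
lemma neumann_fixed [DecidableEq S] {Q : Matrix S S ℝ} (h0 : ∀ s s', 0 ≤ Q s s')
    (h1 : ∀ s, ∑ s', Q s s' = 1) {γ : ℝ} (hγ : γ ∈ Set.Ioo (0:ℝ) 1) (ρ : S → ℝ) :
    (∑' t : ℕ, γ ^ t • ((Q ^ t).mulVec ρ))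
      = ρ + γ • Q.mulVec (∑' t : ℕ, γ ^ t • ((Q ^ t).mulVec ρ)) := by
  have hb : ∀ t : ℕ, ‖(Q ^ t).mulVec ρ‖ ≤ ‖ρ‖ := by
    intro t
    induction t with
    | zero => simp
    | succ t ih =>
      rw [pow_succ', ← Matrix.mulVec_mulVec]
      exact (norm_mulVec_le_of_stochastic h0 h1 _).trans ih
  have hsum : Summable fun t : ℕ => γ ^ t • ((Q ^ t).mulVec ρ) := by
    refine Summable.of_norm_bounded
      ((summable_geometric_of_lt_one hγ.1.le hγ.2).mul_right ‖ρ‖) fun t => ?_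
    rw [norm_smul, norm_pow, Real.norm_of_nonneg hγ.1.le]
    exact mul_le_mul_of_nonneg_left (hb t) (pow_nonneg hγ.1.le t)
  conv_lhs => rw [hsum.tsum_eq_zero_add]
  have hcomm := (LinearMap.toContinuousLinearMap Q.mulVecLin).map_tsum hsum
  simp only [LinearMap.coe_toContinuousLinearMap', Matrix.mulVecLin_apply] at hcomm
  rw [hcomm, ← tsum_const_smul'']
  congr 1
  · simp
  · refine tsum_congr fun t => ?_
    rw [Matrix.mulVec_smul, Matrix.mulVec_mulVec, ← pow_succ', smul_smul, ← pow_succ']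

end Stochastic

/-! ### One-step games and policy evaluation -/

lemma Pmat_nonneg {S A B : Type*} [Fintype S] [MeasurableSpace A] [MeasurableSpace B]
    {P : S → S → A → B → ℝ} (hP0 : ∀ s s' a b, 0 ≤ P s s' a b)
    (μ : S → ProbabilityMeasure A) (ν : S → ProbabilityMeasure B) (s s' : S) :
    0 ≤ Pmat P μ ν s s' :=
  integral_nonneg fun a => integral_nonneg fun b => hP0 s s' a b

lemma Tpol_sub {S A B : Type*} [Fintype S] [MeasurableSpace A] [MeasurableSpace B]
    (γ : ℝ) (r : S → A → B → ℝ) (P : S → S → A → B → ℝ)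
    (μ : S → ProbabilityMeasure A) (ν : S → ProbabilityMeasure B) (v w : S → ℝ) (s : S) :
    Tpol γ r P μ ν v s - Tpol γ r P μ ν w s = γ * (Pmat P μ ν).mulVec (v - w) s := by
  simp only [Tpol, Matrix.mulVec_sub, Pi.sub_apply]
  ring

/-- Payoff `r(s,a,b) + γ ∑ P(s'|s,a,b) v(s')` of the one-shot game played at state `s` with
continuation values `v`. -/
def stagePayoff {S A B : Type*} [Fintype S]
    (γ : ℝ) (r : S → A → B → ℝ) (P : S → S → A → B → ℝ) (v : S → ℝ) (s : S)
    (a : A) (b : B) : ℝ :=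
  r s a b + γ * ∑ s', P s s' a b * v s'

lemma continuous_stagePayoff {S A B : Type*} [Fintype S] [TopologicalSpace A]
    [TopologicalSpace B] (γ : ℝ) {r : S → A → B → ℝ}
    (hr : ∀ s, Continuous fun p : A × B => r s p.1 p.2) {P : S → S → A → B → ℝ}
    (hPcont : ∀ s s', Continuous fun p : A × B => P s s' p.1 p.2) (v : S → ℝ) (s : S) :
    Continuous fun p : A × B => stagePayoff γ r P v s p.1 p.2 :=
  (hr s).add (continuous_const.mul
    (continuous_finsetSum _ fun s' _ => (hPcont s s').mul continuous_const))

section Game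

variable {S A B : Type*} [Fintype S]
  [MetricSpace A] [CompactSpace A] [MeasurableSpace A] [BorelSpace A]
  [MetricSpace B] [CompactSpace B] [MeasurableSpace B] [BorelSpace B]

lemma Pmat_sum {P : S → S → A → B → ℝ}
    (hPcont : ∀ s s', Continuous fun p : A × B => P s s' p.1 p.2)
    (hPsum : ∀ s a b, ∑ s', P s s' a b = 1)
    (μ : S → ProbabilityMeasure A) (ν : S → ProbabilityMeasure B) (s : S) :
    ∑ s', Pmat P μ ν s s' = 1 := by
  simp only [Pmat, Matrix.of_apply]
  rw [Finset.sum_congr rfl fun s' _ => iterated_eq_prod (μ s) (ν s) (hPcont s s'),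
    ← integral_finsetSum _ fun s' _ => integrable_of_continuous _ (hPcont s s')]
  simp [hPsum]

lemma Tpol_eq_stage (γ : ℝ) {r : S → A → B → ℝ}
    (hr : ∀ s, Continuous fun p : A × B => r s p.1 p.2) {P : S → S → A → B → ℝ}
    (hPcont : ∀ s s', Continuous fun p : A × B => P s s' p.1 p.2)
    (μ : S → ProbabilityMeasure A) (ν : S → ProbabilityMeasure B) (v : S → ℝ) (s : S) :
    Tpol γ r P μ ν v s
      = ∫ a, ∫ b, stagePayoff γ r P v s a b ∂(ν s : Measure B) ∂(μ s : Measure A) := by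
  have hPv : ∀ s', Continuous fun p : A × B => P s s' p.1 p.2 * v s' :=
    fun s' => (hPcont s s').mul continuous_const
  rw [iterated_eq_prod _ _ (continuous_stagePayoff γ hr hPcont v s)]
  simp only [stagePayoff]
  have hsum : Continuous fun p : A × B => γ * ∑ s', P s s' p.1 p.2 * v s' :=
    continuous_const.mul (continuous_finsetSum _ fun s' _ => hPv s')
  rw [integral_add (integrable_of_continuous _ (hr s)) (integrable_of_continuous _ hsum),
    integral_const_mul,
    integral_finsetSum _ fun s' _ => integrable_of_continuous _ (hPv s')]
  simp only [integral_mul_const, Tpol, rPol, Pmat, Matrix.mulVec, dotProduct, Matrix.of_apply]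
  rw [iterated_eq_prod _ _ (hr s)]
  congr 2
  exact Finset.sum_congr rfl fun s' _ => by rw [iterated_eq_prod _ _ (hPcont s s')]

lemma vVal_fixed [DecidableEq S] {γ : ℝ} (hγ : γ ∈ Set.Ioo (0:ℝ) 1) (r : S → A → B → ℝ)
    {P : S → S → A → B → ℝ}
    (hPcont : ∀ s s', Continuous fun p : A × B => P s s' p.1 p.2)
    (hP0 : ∀ s s' a b, 0 ≤ P s s' a b) (hPsum : ∀ s a b, ∑ s', P s s' a b = 1)
    (μ : S → ProbabilityMeasure A) (ν : S → ProbabilityMeasure B) :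
    Tpol γ r P μ ν (vVal γ r P μ ν) = vVal γ r P μ ν :=
  (neumann_fixed (Pmat_nonneg hP0 μ ν) (Pmat_sum hPcont hPsum μ ν) hγ (rPol r μ ν)).symm

end Game

theorem stmt6 {S A B : Type*} [Fintype S] [DecidableEq S]
    [MetricSpace A] [CompactSpace A] [Nonempty A] [MeasurableSpace A] [BorelSpace A]
    [MetricSpace B] [CompactSpace B] [Nonempty B] [MeasurableSpace B] [BorelSpace B]
    (γ : ℝ) (hγ : γ ∈ Set.Ioo (0:ℝ) 1)
    (r : S → A → B → ℝ) (hr : ∀ s, Continuous fun p : A × B => r s p.1 p.2)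
    (P : S → S → A → B → ℝ)
    (hPcont : ∀ s s', Continuous fun p : A × B => P s s' p.1 p.2)
    (hP0 : ∀ s s' a b, 0 ≤ P s s' a b) (hP1 : ∀ s s' a b, P s s' a b ≤ 1)
    (hPsum : ∀ s a b, ∑ s', P s s' a b = 1)
    :
    ∃ vstar : S → ℝ,
      (∀ s : S, (⨆ μ : S → ProbabilityMeasure A, ⨅ ν : S → ProbabilityMeasure B,
          Tpol γ r P μ ν vstar s) = vstar s)
      ∧ (∀ w : S → ℝ,
          (∀ s : S, (⨆ μ : S → ProbabilityMeasure A, ⨅ ν : S → ProbabilityMeasure B,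
              Tpol γ r P μ ν w s) = w s) → w = vstar)
      ∧ (∀ s : S, vstar s
          = ⨆ μ : S → ProbabilityMeasure A, ⨅ ν : S → ProbabilityMeasure B, vVal γ r P μ ν s)
      ∧ (∀ s : S, vstar s
          = ⨅ ν : S → ProbabilityMeasure B, ⨆ μ : S → ProbabilityMeasure A, vVal γ r P μ ν s) := by
  have : Nonempty (ProbabilityMeasure A) :=
    ⟨⟨Measure.dirac (Classical.arbitrary A), inferInstance⟩⟩
  have : Nonempty (ProbabilityMeasure B) :=
    ⟨⟨Measure.dirac (Classical.arbitrary B), inferInstance⟩⟩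
  have hQ0 := Pmat_nonneg (A := A) (B := B) hP0
  have hQ1 := Pmat_sum hPcont hPsum
  have hTb : ∀ v s, ∃ C, ∀ μ ν, |Tpol γ r P μ ν v s| ≤ C := fun v s => by
    obtain ⟨C, hC⟩ := exists_bound (continuous_stagePayoff γ hr hPcont v s)
    exact ⟨C, fun μ ν => by rw [Tpol_eq_stage γ hr hPcont]; exact hC _ _⟩
  let T : (S → ℝ) → S → ℝ := fun v s =>
    ⨆ μ : S → ProbabilityMeasure A, ⨅ ν : S → ProbabilityMeasure B, Tpol γ r P μ ν v s
  have hTle : ∀ v w s, T v s ≤ T w s + γ * ‖v - w‖ := fun v w s => by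
    obtain ⟨C, hC⟩ := hTb v s
    obtain ⟨D, hD⟩ := hTb w s
    refine supInf_le_add (C := max C D) (fun μ ν => (hC μ ν).trans (le_max_left _ _))
      (fun μ ν => (hD μ ν).trans (le_max_right _ _)) fun μ ν => ?_
    have h1 := Tpol_sub γ r P μ ν v w s
    have h2 : (Pmat P μ ν).mulVec (v - w) s ≤ ‖v - w‖ :=
      (le_abs_self _).trans ((norm_le_pi_norm ((Pmat P μ ν).mulVec (v - w)) s).trans
        (norm_mulVec_le_of_stochastic (hQ0 μ ν) (hQ1 μ ν) _))
    linarith [mul_le_mul_of_nonneg_left h2 hγ.1.le]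
  have hcontr : ContractingWith (⟨γ, hγ.1.le⟩ : NNReal) T := by
    refine ⟨by exact_mod_cast hγ.2, LipschitzWith.of_dist_le_mul fun v w => ?_⟩
    refine (dist_pi_le_iff (mul_nonneg hγ.1.le dist_nonneg)).2 fun s => ?_
    rw [Real.dist_eq, dist_eq_norm, abs_le]
    have h1 := hTle v w s
    have h2 := hTle w v s
    rw [norm_sub_rev] at h2
    change -(γ * ‖v - w‖) ≤ _ ∧ _ ≤ γ * ‖v - w‖
    constructor <;> linarith
  have hfix : T hcontr.fixedPoint = hcontr.fixedPoint := hcontr.fixedPoint_isFixedPt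
  set v := hcontr.fixedPoint with hv
  -- The maximizer's `ε`-optimal stationary policy comes straight from the definition of `T`; the
  -- minimizer's one, `hupp`, requires the minimax theorem at every state.
  have hlow : ∀ ε > 0, ∃ μ, ∀ ν s, v s - ε ≤ Tpol γ r P μ ν v s := fun ε hε => by
    have : ∀ s, ∃ m : ProbabilityMeasure A, ∀ n : ProbabilityMeasure B, v s - ε ≤
        ∫ a, ∫ b, stagePayoff γ r P v s a b ∂(n : Measure B) ∂(m : Measure A) := fun s => by
      obtain ⟨C, hC⟩ := hTb v s
      have hlt : v s - ε < ⨆ μ : S → ProbabilityMeasure A, ⨅ ν : S → ProbabilityMeasure B,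
          Tpol γ r P μ ν v s := by
        have : T v s = v s := congrFun hfix s
        change v s - ε < T v s
        linarith
      obtain ⟨μ, hμ⟩ := exists_lt_of_lt_ciSup hlt
      refine ⟨μ s, fun n => ?_⟩
      have := ciInf_le (⟨-C, by rintro _ ⟨ν, rfl⟩; exact (abs_le.1 (hC μ ν)).1⟩ :
        BddBelow (Set.range fun ν => Tpol γ r P μ ν v s)) (fun _ => n)
      rw [Tpol_eq_stage γ hr hPcont] at this
      exact hμ.le.trans this
    choose μ hμ using this
    exact ⟨μ, fun ν s => by rw [Tpol_eq_stage γ hr hPcont]; exact hμ s (ν s)⟩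
  have hupp : ∀ ε > 0, ∃ ν, ∀ μ s, Tpol γ r P μ ν v s ≤ v s + ε := fun ε hε => by
    have : ∀ s, ∃ n : ProbabilityMeasure B, ∀ m : ProbabilityMeasure A,
        ∫ a, ∫ b, stagePayoff γ r P v s a b ∂(n : Measure B) ∂(m : Measure A)
          ≤ v s + ε / 2 + ε / 2 := fun s => by
      obtain ⟨C, hC⟩ := hTb v s
      refine minimax_approx (continuous_stagePayoff γ hr hPcont v s) (half_pos hε) fun m => ?_
      have hb : BddAbove (Set.range fun μ : S → ProbabilityMeasure A =>
          ⨅ ν : S → ProbabilityMeasure B, Tpol γ r P μ ν v s) := by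
        refine ⟨C, ?_⟩
        rintro _ ⟨μ, rfl⟩
        exact (ciInf_le ⟨-C, by rintro _ ⟨ν, rfl⟩; exact (abs_le.1 (hC μ ν)).1⟩
          (Classical.arbitrary _)).trans (abs_le.1 (hC μ _)).2
      have hlt : (⨅ ν : S → ProbabilityMeasure B, Tpol γ r P (fun _ => m) ν v s)
          < v s + ε / 2 := by
        have h1 : _ ≤ T v s := le_ciSup hb fun _ => m
        have h2 : T v s = v s := congrFun hfix s
        linarith
      obtain ⟨ν, hν⟩ := exists_lt_of_ciInf_lt hlt
      rw [Tpol_eq_stage γ hr hPcont] at hν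
      exact ⟨ν s, hν⟩
    choose ν hν using this
    refine ⟨ν, fun μ s => ?_⟩
    rw [Tpol_eq_stage γ hr hPcont]
    linarith [hν s (μ s)]
  have h1γ : 0 < 1 - γ := sub_pos.2 hγ.2
  -- A Bellman inequality with error `ε` for `w` compares `w` with `vVal`, up to `ε / (1 - γ)`.
  have hup : ∀ {ε : ℝ} {w : S → ℝ} {μ ν}, (∀ s, Tpol γ r P μ ν w s ≤ w s + ε) →
      ∀ s, vVal γ r P μ ν s ≤ w s + ε / (1 - γ) := fun {ε w μ ν} h s => by
    have := le_div_of_le_discounted (hQ0 μ ν) (hQ1 μ ν) hγ (d := vVal γ r P μ ν - w) (ε := ε)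
      (fun s => by
        rw [← Tpol_sub γ r, vVal_fixed hγ r hPcont hP0 hPsum, Pi.sub_apply]
        linarith [h s]) s
    rw [Pi.sub_apply] at this
    linarith
  have hlo : ∀ {ε : ℝ} {w : S → ℝ} {μ ν}, (∀ s, w s - ε ≤ Tpol γ r P μ ν w s) →
      ∀ s, w s - ε / (1 - γ) ≤ vVal γ r P μ ν s := fun {ε w μ ν} h s => by
    have := le_div_of_le_discounted (hQ0 μ ν) (hQ1 μ ν) hγ (d := w - vVal γ r P μ ν) (ε := ε)
      (fun s => by
        rw [← Tpol_sub γ r, vVal_fixed hγ r hPcont hP0 hPsum, Pi.sub_apply]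
        linarith [h s]) s
    rw [Pi.sub_apply] at this
    linarith
  obtain ⟨C, hC⟩ : ∃ C, ∀ μ ν s, |Tpol γ r P μ ν 0 s| ≤ C := by
    choose C hC using hTb 0
    exact ⟨∑ s, |C s|, fun μ ν s => (hC s μ ν).trans ((le_abs_self _).trans
      (Finset.single_le_sum (f := fun s => |C s|) (fun _ _ => abs_nonneg _) (Finset.mem_univ s)))⟩
  have hVb : ∀ s μ ν, |vVal γ r P μ ν s| ≤ C / (1 - γ) := fun s μ ν => by
    have h1 := hup (w := 0) (fun s => by simpa using (abs_le.1 (hC μ ν s)).2) s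
    have h2 := hlo (w := 0) (fun s => by simpa using (abs_le.1 (hC μ ν s)).1) s
    simp only [Pi.zero_apply, zero_add, zero_sub] at h1 h2
    exact abs_le.2 ⟨h2, h1⟩
  have hsaddle := fun s => saddle_of_approx (G := fun μ ν => vVal γ r P μ ν s) (w := v s) (hVb s)
    (fun ε hε => by
      obtain ⟨μ, hμ⟩ := hlow (ε * (1 - γ)) (mul_pos hε h1γ)
      refine ⟨μ, fun ν => ?_⟩
      simpa [h1γ.ne'] using hlo (hμ ν) s)
    (fun ε hε => by
      obtain ⟨ν, hν⟩ := hupp (ε * (1 - γ)) (mul_pos hε h1γ)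
      refine ⟨ν, fun μ => ?_⟩
      simpa [h1γ.ne'] using hup (hν μ) s)
  exact ⟨v, congrFun hfix, fun w hw => hcontr.fixedPoint_unique (funext hw),
    fun s => (hsaddle s).1, fun s => (hsaddle s).2⟩
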